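/- arXiv:2306.03801 — 4 statements merged into one kernel-verified Lean document; each statement's English description precedes it below -/
import Mathlib

section
/- Let μ be a finite signed Borel measure on ℝⁿ with total mass zero whose Jordan decomposition is given by μ⁺ = Σ_{i=1}^{k} δ_{x_i} and μ⁻ = Σ_{i=1}^{k} δ_{y_i}, where X = (x_1, …, x_k) and Y = (y_1, …, y_k) are finite lists of points of ℝⁿ and δ_x denotes the Dirac measure at x. Then for every p ∈ [1, ∞], the Kantorovich–Rubinstein norm satisfies ‖μ‖_p^KR = min { Σ_{i=1}^{k} ‖x_i − y_{γ(i)}‖_p : γ a permutation of {1, …, k} }. -/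
open MeasureTheory

noncomputable def lpnorm (p : ENNReal) {n : ℕ} (v : Fin n → ℝ) : ℝ :=
  ‖(WithLp.equiv p (Fin n → ℝ)).symm v‖

noncomputable def KRgen {E : Type*} [MeasurableSpace E] (cost : E → E → ENNReal)
    (μ : SignedMeasure E) : ENNReal :=
  ⨅ (ψ : Measure (E × E)) (_ : ψ.map Prod.fst = μ.toJordanDecomposition.posPart ∧
      ψ.map Prod.snd = μ.toJordanDecomposition.negPart),
    ∫⁻ w, cost w.1 w.2 ∂ψ

noncomputable def KRnorm (p : ENNReal) {n : ℕ} (μ : SignedMeasure (Fin n → ℝ)) : ENNReal :=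
  KRgen (fun x y => ENNReal.ofReal (lpnorm p (x - y))) μ

noncomputable def KRnormR (μ : SignedMeasure ℝ) : ENNReal :=
  KRgen (fun x y => ENNReal.ofReal |x - y|) μ

lemma lpnorm_nonneg_aux {p : ENNReal} (hp : 1 ≤ p) {n : ℕ} (v : Fin n → ℝ) : 0 ≤ lpnorm p v := by
  have : Fact (1 ≤ p) := ⟨hp⟩
  exact norm_nonneg _

/-- Summing over the index set with multiplicities divided out. -/
lemma sum_div_mult {E : Type*} [DecidableEq E] {k : ℕ} (Y : Fin k → E) (f : E → ℝ) :
    ∑ j, f (Y j) / ((Finset.univ.filter (fun i => Y i = Y j)).card : ℝ)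
      = ∑ y ∈ Finset.univ.image Y, f y := by
  rw [Finset.sum_comp (fun y => f y / ((Finset.univ.filter (fun i => Y i = y)).card : ℝ)) Y]
  refine Finset.sum_congr rfl fun y hy => ?_
  obtain ⟨i, -, rfl⟩ := Finset.mem_image.1 hy
  have : ((Finset.univ.filter (fun i' => Y i' = Y i)).card : ℝ) ≠ 0 := by
    have : 0 < (Finset.univ.filter (fun i' => Y i' = Y i)).card :=
      Finset.card_pos.2 ⟨i, by simp⟩
    exact_mod_cast this.ne'
  rw [nsmul_eq_mul]
  field_simp

lemma sum_dirac_singleton {E : Type*} [DecidableEq E] [MeasurableSpace E]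
    [MeasurableSingletonClass E] {k : ℕ} (X : Fin k → E) (x : E) :
    (∑ i, Measure.dirac (X i)) {x} = ((Finset.univ.filter (fun i => X i = x)).card : ENNReal) := by
  rw [Measure.finsetSum_apply]
  simp [Set.indicator_apply]

lemma sum_dirac_compl {E : Type*} [DecidableEq E] [MeasurableSpace E]
    [MeasurableSingletonClass E] {k : ℕ} (X : Fin k → E) :
    (∑ i, Measure.dirac (X i)) ((↑(Finset.univ.image X) : Set E)ᶜ) = 0 := by
  rw [Measure.finsetSum_apply]
  refine Finset.sum_eq_zero fun i _ => ?_
  rw [Measure.dirac_apply' _ (Finset.measurableSet _).compl]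
  simp

lemma exists_perm_of_doublyStochastic {k : ℕ} (M : Matrix (Fin k) (Fin k) ℝ)
    (hM : M ∈ doublyStochastic ℝ (Fin k)) (c : Fin k → Fin k → ℝ) :
    ∃ γ : Equiv.Perm (Fin k), ∑ i, c i (γ i) ≤ ∑ i, ∑ j, c i j * M i j := by
  obtain ⟨w, hw0, hw1, hw⟩ := exists_eq_sum_perm_of_mem_doublyStochastic hM
  have key : ∑ i, ∑ j, c i j * M i j = ∑ σ, w σ * ∑ i, c i (σ i) := by
    have hMij : ∀ i j, M i j = ∑ σ : Equiv.Perm (Fin k), w σ * (if σ i = j then 1 else 0) := by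
      intro i j
      rw [← hw, Matrix.sum_apply]
      refine Finset.sum_congr rfl fun σ _ => ?_
      simp [PEquiv.toMatrix_apply, Equiv.toPEquiv_apply]
    simp_rw [hMij, Finset.mul_sum]
    rw [Finset.sum_congr rfl (fun i _ => Finset.sum_comm), Finset.sum_comm]
    refine Finset.sum_congr rfl fun σ _ => Finset.sum_congr rfl fun i _ => ?_
    simp [mul_comm]
  by_contra! h
  have h2 : ∀ σ, w σ * (∑ i, ∑ j, c i j * M i j) ≤ w σ * ∑ i, c i (σ i) := fun σ =>
    mul_le_mul_of_nonneg_left (h σ).le (hw0 σ)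
  obtain ⟨σ, hσ⟩ : ∃ σ, 0 < w σ := by
    by_contra! h3
    have := Finset.sum_nonpos (s := Finset.univ) (fun σ _ => h3 σ)
    linarith
  have h4 := Finset.sum_lt_sum (s := Finset.univ) (fun σ _ => h2 σ)
    ⟨σ, Finset.mem_univ _, mul_lt_mul_of_pos_left (h σ) hσ⟩
  rw [← Finset.sum_mul, hw1, one_mul, ← key] at h4
  exact lt_irrefl _ h4

/-- Marginal in finite-sum form. -/
lemma marginal_fst {E : Type*} [DecidableEq E] [MeasurableSpace E]
    [MeasurableSingletonClass E] {k : ℕ} (X Y : Fin k → E) (ψ : Measure (E × E))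
    [IsFiniteMeasure ψ]
    (h1 : ψ.map Prod.fst = ∑ i, Measure.dirac (X i))
    (h2 : ψ.map Prod.snd = ∑ i, Measure.dirac (Y i)) (x : E) :
    ∑ y ∈ Finset.univ.image Y, ψ.real {(x, y)}
      = ((Finset.univ.filter (fun i => X i = x)).card : ℝ) := by
  have e1 : ψ (Prod.fst ⁻¹' {x}) = ((Finset.univ.filter (fun i => X i = x)).card : ENNReal) := by
    rw [← Measure.map_apply measurable_fst (measurableSet_singleton x), h1, sum_dirac_singleton]
  have e2 : ψ (Prod.snd ⁻¹' ((↑(Finset.univ.image Y) : Set E)ᶜ)) = 0 := by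
    rw [← Measure.map_apply measurable_snd (Finset.measurableSet _).compl, h2, sum_dirac_compl]
  have e3 : ∑ y ∈ Finset.univ.image Y, ψ {(x, y)} = ψ (Prod.fst ⁻¹' {x}) := by
    have : ∑ y ∈ Finset.univ.image Y, ψ {(x, y)}
        = ψ (↑((Finset.univ.image Y).image (fun y => (x, y))) : Set (E × E)) := by
      rw [← sum_measure_singleton,
        Finset.sum_image (s := Finset.univ.image Y) (g := fun y => (x, y))]
      intro a _ b _ hab
      exact (Prod.mk.inj hab).2
    rw [this]
    apply le_antisymm
    · apply measure_mono
      rintro ⟨a, b⟩ hab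
      simp at hab
      simp [hab.2]
    · calc ψ (Prod.fst ⁻¹' {x})
          ≤ ψ ((↑((Finset.univ.image Y).image (fun y => (x, y))) : Set (E × E)) ∪
              (Prod.snd ⁻¹' ((↑(Finset.univ.image Y) : Set E)ᶜ))) := by
            apply measure_mono
            rintro ⟨a, b⟩ hab
            simp only [Set.mem_preimage, Set.mem_singleton_iff] at hab
            subst hab
            by_cases hb : b ∈ Finset.univ.image Y
            · left
              simpa using hb
            · right
              simpa using hb
        _ ≤ _ := measure_union_le _ _
        _ = _ := by rw [e2, add_zero]
  simp only [Measure.real]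
  rw [← ENNReal.toReal_sum (fun _ _ => measure_ne_top _ _), e3, e1]
  simp

lemma marginal_snd {E : Type*} [DecidableEq E] [MeasurableSpace E]
    [MeasurableSingletonClass E] {k : ℕ} (X Y : Fin k → E) (ψ : Measure (E × E))
    [IsFiniteMeasure ψ]
    (h1 : ψ.map Prod.fst = ∑ i, Measure.dirac (X i))
    (h2 : ψ.map Prod.snd = ∑ i, Measure.dirac (Y i)) (y : E) :
    ∑ x ∈ Finset.univ.image X, ψ.real {(x, y)}
      = ((Finset.univ.filter (fun i => Y i = y)).card : ℝ) := by
  have := marginal_fst Y X (ψ.map Prod.swap)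
    (by rw [Measure.map_map measurable_fst measurable_swap]; exact h2)
    (by rw [Measure.map_map measurable_snd measurable_swap]; exact h1) y
  rw [← this]
  refine Finset.sum_congr rfl fun x _ => ?_
  simp only [Measure.real]
  rw [Measure.map_apply measurable_swap (measurableSet_singleton _)]
  congr 2
  ext ⟨a, b⟩
  simp [and_comm]

lemma lower_bound {E : Type*} [MeasurableSpace E]
    [MeasurableSingletonClass E] {k : ℕ} (X Y : Fin k → E) (ψ : Measure (E × E))
    (h1 : ψ.map Prod.fst = ∑ i, Measure.dirac (X i))
    (h2 : ψ.map Prod.snd = ∑ i, Measure.dirac (Y i))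
    (c : E → E → ℝ) (hc : ∀ x y, 0 ≤ c x y) :
    ∃ γ : Equiv.Perm (Fin k), ENNReal.ofReal (∑ i, c (X i) (Y (γ i)))
      ≤ ∫⁻ w, ENNReal.ofReal (c w.1 w.2) ∂ψ := by
  classical
  have : IsFiniteMeasure ψ := by
    constructor
    have : ψ Set.univ = (ψ.map Prod.fst) Set.univ := by
      rw [Measure.map_apply measurable_fst MeasurableSet.univ, Set.preimage_univ]
    rw [this, h1]
    exact measure_lt_top _ _
  have hpos : ∀ (Z : Fin k → E) (i : Fin k),
      ((Finset.univ.filter (fun i' => Z i' = Z i)).card : ℝ) ≠ 0 := by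
    intro Z i
    have : 0 < (Finset.univ.filter (fun i' => Z i' = Z i)).card :=
      Finset.card_pos.2 ⟨i, by simp⟩
    exact_mod_cast this.ne'
  let M : Matrix (Fin k) (Fin k) ℝ := fun i j =>
    ψ.real {(X i, Y j)} / ((Finset.univ.filter (fun i' => X i' = X i)).card : ℝ)
      / ((Finset.univ.filter (fun i' => Y i' = Y j)).card : ℝ)
  have hM : M ∈ doublyStochastic ℝ (Fin k) := by
    rw [mem_doublyStochastic_iff_sum]
    refine ⟨fun i j => by positivity, fun i => ?_, fun j => ?_⟩
    · rw [sum_div_mult Y (fun y => ψ.real {(X i, y)} /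
        ((Finset.univ.filter (fun i' => X i' = X i)).card : ℝ)), ← Finset.sum_div,
        marginal_fst X Y ψ h1 h2]
      exact div_self (hpos X i)
    · have hcomm : ∀ i, M i j = ψ.real {(X i, Y j)}
          / ((Finset.univ.filter (fun i' => Y i' = Y j)).card : ℝ)
          / ((Finset.univ.filter (fun i' => X i' = X i)).card : ℝ) := fun i => div_right_comm _ _ _
      rw [Finset.sum_congr rfl (fun i _ => hcomm i), sum_div_mult X (fun x => ψ.real {(x, Y j)} /
        ((Finset.univ.filter (fun i' => Y i' = Y j)).card : ℝ)), ← Finset.sum_div,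
        marginal_snd X Y ψ h1 h2]
      exact div_self (hpos Y j)
  obtain ⟨γ, hγ⟩ := exists_perm_of_doublyStochastic M hM (fun i j => c (X i) (Y j))
  refine ⟨γ, (ENNReal.ofReal_le_ofReal hγ).trans ?_⟩
  have hsum : ∑ i, ∑ j, c (X i) (Y j) * M i j
      = ∑ w ∈ Finset.univ.image X ×ˢ Finset.univ.image Y, c w.1 w.2 * ψ.real {w} := by
    rw [Finset.sum_product, ← sum_div_mult X]
    refine Finset.sum_congr rfl fun i _ => ?_
    rw [← sum_div_mult Y, Finset.sum_div]
    refine Finset.sum_congr rfl fun j _ => ?_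
    simp only [M]
    ring
  rw [hsum, ENNReal.ofReal_sum_of_nonneg
    (fun w _ => mul_nonneg (hc _ _) measureReal_nonneg)]
  calc _ = ∑ w ∈ Finset.univ.image X ×ˢ Finset.univ.image Y,
        ENNReal.ofReal (c w.1 w.2) * ψ {w} := by
        refine Finset.sum_congr rfl fun w _ => ?_
        rw [ENNReal.ofReal_mul (hc _ _), ofReal_measureReal]
    _ = ∫⁻ w in ↑(Finset.univ.image X ×ˢ Finset.univ.image Y),
        ENNReal.ofReal (c w.1 w.2) ∂ψ := (lintegral_finset _ _).symm
    _ ≤ _ := setLIntegral_le_lintegral _ _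

lemma map_sum_dirac {E F : Type*} [MeasurableSpace E] [MeasurableSpace F] {k : ℕ} (Z : Fin k → E)
    (f : E → F) (hf : Measurable f) :
    (∑ i, Measure.dirac (Z i)).map f = ∑ i, Measure.dirac (f (Z i)) := by
  rw [← Measure.mapₗ_apply_of_measurable hf, map_sum]
  refine Finset.sum_congr rfl fun i _ => ?_
  rw [Measure.mapₗ_apply_of_measurable hf, Measure.map_dirac' hf]

/-- For a signed measure on ℝⁿ whose Jordan decomposition consists of two
equinumerous sums of Dirac measures, the Kantorovich–Rubinstein p-norm equals the minimal
cost of a perfect matching between the two point configurations. -/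
theorem kr_norm_eq_min_matching {n k : ℕ} (μ : SignedMeasure (Fin n → ℝ))
    (X Y : Fin k → (Fin n → ℝ))
    (hmass : μ Set.univ = 0)
    (hpos : μ.toJordanDecomposition.posPart = ∑ i, Measure.dirac (X i))
    (hneg : μ.toJordanDecomposition.negPart = ∑ i, Measure.dirac (Y i))
    (p : ENNReal) (hp : 1 ≤ p) :
    KRnorm p μ
      = ⨅ γ : Equiv.Perm (Fin k), ENNReal.ofReal (∑ i, lpnorm p (X i - Y (γ i))) := by
  have hc := lpnorm_nonneg_aux hp (n := n)
  unfold KRnorm KRgen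
  rw [hpos, hneg]
  apply le_antisymm
  · refine le_iInf fun γ => ?_
    have hm : (∑ i, Measure.dirac (X i, Y (γ i))).map Prod.fst = ∑ i, Measure.dirac (X i) ∧
        (∑ i, Measure.dirac (X i, Y (γ i))).map Prod.snd = ∑ i, Measure.dirac (Y i) := by
      constructor
      · rw [map_sum_dirac _ _ measurable_fst]
      · rw [map_sum_dirac _ _ measurable_snd]
        exact Equiv.sum_comp γ (fun j => Measure.dirac (Y j))
    refine le_trans (iInf₂_le (∑ i, Measure.dirac (X i, Y (γ i))) hm) ?_
    rw [lintegral_finsetSum_measure, ENNReal.ofReal_sum_of_nonneg (fun i _ => hc _)]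
    simp
  · refine le_iInf₂ fun ψ h => ?_
    obtain ⟨γ, hγ⟩ := lower_bound X Y ψ h.1 h.2 (fun x y => lpnorm p (x - y)) (fun _ _ => hc _)
    exact (iInf_le _ γ).trans hγ
end

section
/- Let S be a finite simplicial complex and let f, g : S → ℝⁿ be monotonic maps (i.e., f(τ₁) ≤ f(τ₂) coordinatewise whenever τ₁ ⊆ τ₂ ∈ S, and likewise for g). Define the Euler decomposition signed measures μ_χ(f) = Σ_{τ ∈ S} (−1)^{dim(τ)} δ_{f(τ)} and μ_χ(g) = Σ_{τ ∈ S} (−1)^{dim(τ)} δ_{g(τ)}, where dim(τ) = |τ| − 1. Then ‖μ_χ(f) − μ_χ(g)‖_1^KR ≤ Σ_{τ ∈ S} ‖f(τ) − g(τ)‖_1. -/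
open MeasureTheory

/-- A finite simplicial complex on a finite vertex set V: a finite collection of nonempty
finite subsets of V, containing all singletons and closed under taking nonempty subsets. -/
structure FinSimplicialComplex (V : Type*) [DecidableEq V] [Fintype V] where
  faces : Finset (Finset V)
  nonempty_of_mem : ∀ τ ∈ faces, τ.Nonempty
  singleton_mem : ∀ v : V, {v} ∈ faces
  down_closed : ∀ τ ∈ faces, ∀ σ, σ ⊆ τ → σ.Nonempty → σ ∈ faces

/-- The Euler decomposition signed measure μ_χ(f) = Σ_{τ ∈ S} (−1)^{dim τ} δ_{f(τ)}. -/
noncomputable def eulerDecompSM {V : Type*} [DecidableEq V] [Fintype V] {n : ℕ}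
    (C : FinSimplicialComplex V) (f : Finset V → (Fin n → ℝ)) :
    SignedMeasure (Fin n → ℝ) :=
  ∑ τ ∈ C.faces, ((-1 : ℤ) ^ (τ.card - 1)) • (Measure.dirac (f τ)).toSignedMeasure

/-- Sum of Dirac masses over a multiset. -/
noncomputable def diracSum {E : Type*} [MeasurableSpace E] (m : Multiset E) : Measure E :=
  (m.map Measure.dirac).sum

lemma diracSum_zero {E : Type*} [MeasurableSpace E] : diracSum (0 : Multiset E) = 0 := by
  simp [diracSum]

lemma diracSum_cons {E : Type*} [MeasurableSpace E] (a : E) (m : Multiset E) :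
    diracSum (a ::ₘ m) = Measure.dirac a + diracSum m := by
  simp [diracSum]

lemma diracSum_finite {E : Type*} [MeasurableSpace E] (m : Multiset E) :
    IsFiniteMeasure (diracSum m) := by
  induction m using Multiset.induction_on with
  | empty => rw [diracSum_zero]; infer_instance
  | cons a m ih => rw [diracSum_cons]; infer_instance

lemma diracSum_apply_zero {E : Type*} [MeasurableSpace E] (m : Multiset E) (s : Set E)
    (hs : MeasurableSet s) (h : ∀ x ∈ m, x ∉ s) : diracSum m s = 0 := by
  induction m using Multiset.induction_on with
  | empty => rw [diracSum_zero]; simp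
  | cons a m ih =>
    rw [diracSum_cons, Measure.add_apply, ih (fun x hx => h x (Multiset.mem_cons_of_mem hx)),
      Measure.dirac_apply' _ hs]
    simp [h a (Multiset.mem_cons_self a m)]

lemma diracSum_map {E F : Type*} [MeasurableSpace E] [MeasurableSpace F] (m : Multiset E)
    (f : E → F) (hf : Measurable f) : (diracSum m).map f = diracSum (m.map f) := by
  induction m using Multiset.induction_on with
  | empty => simp [diracSum_zero]
  | cons a m ih =>
    rw [diracSum_cons, Measure.map_add _ _ hf, ih, Measure.map_dirac' hf, Multiset.map_cons,
      diracSum_cons]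

lemma diracSum_lintegral {E : Type*} [MeasurableSpace E] [MeasurableSingletonClass E]
    (m : Multiset E) (c : E → ENNReal) : ∫⁻ w, c w ∂(diracSum m) = (m.map c).sum := by
  induction m using Multiset.induction_on with
  | empty => simp [diracSum_zero]
  | cons a m ih =>
    rw [diracSum_cons, lintegral_add_measure, ih, lintegral_dirac, Multiset.map_cons,
      Multiset.sum_cons]

/-- The signed measure attached to a multiset of pairs. -/
noncomputable def pairSM {E : Type*} [MeasurableSpace E] (M : Multiset (E × E)) :
    SignedMeasure E :=
  (M.map (fun w => (Measure.dirac w.1).toSignedMeasure - (Measure.dirac w.2).toSignedMeasure)).sum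

lemma pairSM_cons {E : Type*} [MeasurableSpace E] (w : E × E) (M : Multiset (E × E)) :
    pairSM (w ::ₘ M) = (Measure.dirac w.1).toSignedMeasure - (Measure.dirac w.2).toSignedMeasure
      + pairSM M := by
  simp [pairSM]

lemma pairSM_eq {E : Type*} [MeasurableSpace E] (M : Multiset (E × E))
    [IsFiniteMeasure (diracSum (M.map Prod.fst))] [IsFiniteMeasure (diracSum (M.map Prod.snd))] :
    pairSM M = (diracSum (M.map Prod.fst)).toSignedMeasure
      - (diracSum (M.map Prod.snd)).toSignedMeasure := by
  ext A hA
  rw [VectorMeasure.sub_apply, Measure.toSignedMeasure_apply_measurable hA,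
    Measure.toSignedMeasure_apply_measurable hA]
  clear * - hA
  induction M using Multiset.induction_on with
  | empty => simp [pairSM, diracSum_zero]
  | cons a M ih =>
    haveI := diracSum_finite (M.map Prod.fst)
    haveI := diracSum_finite (M.map Prod.snd)
    rw [pairSM_cons, VectorMeasure.add_apply, ih, VectorMeasure.sub_apply,
      Measure.toSignedMeasure_apply_measurable hA,
      Measure.toSignedMeasure_apply_measurable hA, Multiset.map_cons, Multiset.map_cons,
      diracSum_cons, diracSum_cons, measureReal_add_apply, measureReal_add_apply]
    ring

lemma KRgen_pairSM_disjoint {E : Type*} [MeasurableSpace E] [MeasurableSingletonClass E]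
    (c : E → E → ENNReal) (M : Multiset (E × E))
    (hM : ∀ u ∈ M, ∀ v ∈ M, u.1 ≠ v.2) :
    KRgen c (pairSM M) ≤ (M.map (fun w => c w.1 w.2)).sum := by
  classical
  haveI h1 := diracSum_finite (M.map Prod.fst)
  haveI h2 := diracSum_finite (M.map Prod.snd)
  have hsing : diracSum (M.map Prod.fst) ⟂ₘ diracSum (M.map Prod.snd) := by
    have hA : MeasurableSet (((M.map Prod.snd).toFinset : Finset E) : Set E) :=
      Finset.measurableSet _
    refine ⟨_, hA, ?_, ?_⟩
    · apply diracSum_apply_zero _ _ hA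
      intro x hx hx'
      simp only [Finset.mem_coe, Multiset.mem_toFinset, Multiset.mem_map] at hx hx'
      obtain ⟨u, hu, rfl⟩ := hx
      obtain ⟨v, hv, h⟩ := hx'
      exact hM u hu v hv h.symm
    · apply diracSum_apply_zero _ _ hA.compl
      intro x hx hx'
      exact hx' (by simpa using hx)
  let j : JordanDecomposition E := ⟨diracSum (M.map Prod.fst), diracSum (M.map Prod.snd), hsing⟩
  have hj : (pairSM M).toJordanDecomposition = j :=
    SignedMeasure.toJordanDecomposition_eq (pairSM_eq M)
  unfold KRgen
  refine (iInf₂_le (diracSum M) ?_).trans ?_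
  · rw [hj]
    exact ⟨diracSum_map _ _ measurable_fst, diracSum_map _ _ measurable_snd⟩
  · rw [diracSum_lintegral]

lemma KRgen_pairSM {E : Type*} [MeasurableSpace E] [MeasurableSingletonClass E]
    (c : E → E → ENNReal) (hc : ∀ x y z, c x z ≤ c x y + c y z) (k : ℕ) :
    ∀ M : Multiset (E × E), M.card = k →
      KRgen c (pairSM M) ≤ (M.map (fun w => c w.1 w.2)).sum := by
  induction k using Nat.strong_induction_on with
  | _ k ih =>
  intro M hk
  by_cases hM : ∀ u ∈ M, ∀ v ∈ M, u.1 ≠ v.2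
  · exact KRgen_pairSM_disjoint c M hM
  push Not at hM
  obtain ⟨u, hu, v, hv, huv⟩ := hM
  obtain ⟨N, rfl⟩ := Multiset.exists_cons_of_mem hu
  rw [Multiset.card_cons] at hk
  rcases Multiset.mem_cons.1 hv with rfl | hv
  · have h := ih N.card (by omega) N rfl
    rw [pairSM_cons, huv, sub_self, zero_add, Multiset.map_cons, Multiset.sum_cons]
    exact h.trans le_add_self
  · obtain ⟨P, rfl⟩ := Multiset.exists_cons_of_mem hv
    rw [Multiset.card_cons] at hk
    have h := ih (P.card + 1) (by omega) ((v.1, u.2) ::ₘ P) (by simp)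
    have e : pairSM (u ::ₘ v ::ₘ P) = pairSM ((v.1, u.2) ::ₘ P) := by
      rw [pairSM_cons, pairSM_cons, pairSM_cons, huv]
      abel
    rw [e]
    refine h.trans ?_
    simp only [Multiset.map_cons, Multiset.sum_cons]
    rw [← add_assoc]
    gcongr
    refine (hc v.1 v.2 u.2).trans ?_
    rw [← huv, add_comm]

/-- stability of the Euler decomposition signed measure: for monotonic
filtrations f, g of a finite simplicial complex,
‖μ_χ(f) − μ_χ(g)‖₁^KR ≤ Σ_{τ ∈ S} ‖f(τ) − g(τ)‖₁. -/
theorem euler_decomposition_signed_measure_stability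
    {V : Type*} [DecidableEq V] [Fintype V] {n : ℕ}
    (C : FinSimplicialComplex V) (f g : Finset V → (Fin n → ℝ))
    (hf : ∀ τ₁ ∈ C.faces, ∀ τ₂ ∈ C.faces, τ₁ ⊆ τ₂ → f τ₁ ≤ f τ₂)
    (hg : ∀ τ₁ ∈ C.faces, ∀ τ₂ ∈ C.faces, τ₁ ⊆ τ₂ → g τ₁ ≤ g τ₂) :
    KRnorm 1 (eulerDecompSM C f - eulerDecompSM C g)
      ≤ ENNReal.ofReal (∑ τ ∈ C.faces, lpnorm 1 (f τ - g τ)) := by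
  have hnn : ∀ v : Fin n → ℝ, 0 ≤ lpnorm 1 v := fun v => norm_nonneg _
  have hsymm : ∀ x y : Fin n → ℝ, lpnorm 1 (x - y) = lpnorm 1 (y - x) := by
    intro x y
    unfold lpnorm
    exact norm_sub_rev (WithLp.toLp 1 x) (WithLp.toLp 1 y)
  have htri : ∀ x y z : Fin n → ℝ, lpnorm 1 (x - z) ≤ lpnorm 1 (x - y) + lpnorm 1 (y - z) := by
    intro x y z
    unfold lpnorm
    exact norm_sub_le_norm_sub_add_norm_sub (WithLp.toLp 1 x) (WithLp.toLp 1 y) (WithLp.toLp 1 z)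
  let F : Finset V → (Fin n → ℝ) × (Fin n → ℝ) := fun τ =>
    if Even (τ.card - 1) then (f τ, g τ) else (g τ, f τ)
  have e : eulerDecompSM C f - eulerDecompSM C g = pairSM (C.faces.val.map F) := by
    unfold eulerDecompSM pairSM
    rw [Multiset.map_map, ← Finset.sum_sub_distrib]
    refine Finset.sum_congr rfl fun τ _ => ?_
    by_cases h : Even (τ.card - 1)
    · simp [F, h]
    · have h' := Nat.not_even_iff_odd.1 h
      simp only [F, h, Function.comp, if_false, h'.neg_one_pow, neg_smul, one_smul]
      abel
  rw [e, KRnorm]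
  refine (KRgen_pairSM _ ?_ _ _ rfl).trans ?_
  · intro x y z
    rw [← ENNReal.ofReal_add (hnn _) (hnn _)]
    exact ENNReal.ofReal_le_ofReal (htri x y z)
  · rw [Multiset.map_map, ENNReal.ofReal_sum_of_nonneg (fun _ _ => hnn _)]
    refine le_of_eq (Finset.sum_congr rfl fun τ _ => ?_)
    by_cases h : Even (τ.card - 1)
    · simp [F, h]
    · simp [F, h, hsymm (f τ) (g τ)]
end

section
/- Let Σ be a symmetric positive definite n × n real matrix and let K : ℝⁿ → ℝ be the centered Gaussian density K(x) = exp(−(1/2) xᵀ Σ⁻¹ x) / √((2π)ⁿ det(Σ)). Then for all y, z ∈ ℝⁿ, ‖K_y − K_z‖_{L²} ≤ c · ‖y − z‖_2 with c = ‖Σ⁻¹‖_2^{1/2} / (√2 · π^{n/4} · det(Σ)^{1/4}), where K_y(x) = K(x − y) and ‖Σ⁻¹‖_2 is the operator norm of Σ⁻¹ with respect to the Euclidean norm. -/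
open MeasureTheory

open Matrix in
lemma gauss_sum_sq_integral (n : ℕ) :
    ∫ x : Fin n → ℝ, Real.exp (-(x ⬝ᵥ x)) = Real.sqrt Real.pi ^ n := by
  have h := integral_fintype_prod_volume_eq_pow (ι := Fin n) (𝕜 := ℝ)
    (fun t : ℝ => Real.exp (-1 * t ^ 2))
  rw [integral_gaussian] at h
  simp only [Fintype.card_fin, div_one] at h
  rw [← h]
  congr 1
  ext x
  rw [← Real.exp_sum]
  congr 1
  simp [dotProduct, pow_two]

open Matrix in
lemma gauss_exists_factor {n : ℕ} (S : Matrix (Fin n) (Fin n) ℝ) (hS : S.PosDef) :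
    ∃ B : Matrix (Fin n) (Fin n) ℝ, S⁻¹ = Bᵀ * B := by
  open scoped MatrixOrder in
  obtain ⟨B, hB⟩ := CStarAlgebra.nonneg_iff_eq_star_mul_self.mp hS.inv.posSemidef.nonneg
  exact ⟨B, by rw [hB, star_eq_conjTranspose, conjTranspose_eq_transpose_of_trivial]⟩

open Matrix in
lemma gauss_integral {n : ℕ} (S : Matrix (Fin n) (Fin n) ℝ) (hS : S.PosDef) :
    ∫ x : Fin n → ℝ, Real.exp (-(x ⬝ᵥ S⁻¹ *ᵥ x)) = Real.sqrt Real.pi ^ n * Real.sqrt S.det := by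
  obtain ⟨B, hB⟩ := gauss_exists_factor S hS
  have hd : B.det ^ 2 = S.det⁻¹ := by
    have := congrArg Matrix.det hB
    rw [det_mul, det_transpose, det_nonsing_inv, Ring.inverse_eq_inv'] at this
    rw [this, pow_two]
  have hpos := hS.det_pos
  have hne : B.det ≠ 0 := by
    intro h0
    rw [h0] at hd
    have := inv_pos.mpr hpos
    simp at hd
    linarith
  have habs : |B.det⁻¹| = Real.sqrt S.det := by
    rw [← Real.sqrt_sq_eq_abs, inv_pow, hd, inv_inv]
  have hQ : ∀ x : Fin n → ℝ, x ⬝ᵥ S⁻¹ *ᵥ x = toLin' B x ⬝ᵥ toLin' B x := by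
    intro x
    rw [hB, toLin'_apply, ← mulVec_mulVec, dotProduct_mulVec, vecMul_transpose]
  simp_rw [hQ]
  have hm : Measurable (toLin' B) := (toLin' B).continuous_of_finiteDimensional.measurable
  have hg : Continuous (fun x : Fin n → ℝ => Real.exp (-(x ⬝ᵥ x))) := by
    simp only [dotProduct]; fun_prop
  rw [← integral_map (μ := volume) (φ := toLin' B) (f := fun x => Real.exp (-(x ⬝ᵥ x)))
    hm.aemeasurable hg.aestronglyMeasurable, Real.map_matrix_volume_pi_eq_smul_volume_pi hne,
    integral_smul_measure, gauss_sum_sq_integral, ENNReal.toReal_ofReal (abs_nonneg _), habs,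
    smul_eq_mul, mul_comm]

open Matrix in
lemma gauss_quad_le {n : ℕ} (A : Matrix (Fin n) (Fin n) ℝ) (v : Fin n → ℝ) :
    v ⬝ᵥ A *ᵥ v ≤ ‖Matrix.toEuclideanCLM (𝕜 := ℝ) A‖ * lpnorm 2 v ^ 2 := by
  have h := inner_toEuclideanCLM A (WithLp.toLp 2 v) (WithLp.toLp 2 v)
  simp only at h
  rw [← h]
  have h1 := real_inner_le_norm (WithLp.toLp 2 v) (toEuclideanCLM (𝕜 := ℝ) A (WithLp.toLp 2 v))
  have h2 := (toEuclideanCLM (𝕜 := ℝ) A).le_opNorm (WithLp.toLp 2 v)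
  have h3 : lpnorm 2 v = ‖WithLp.toLp 2 v‖ := rfl
  rw [h3]
  nlinarith [norm_nonneg (WithLp.toLp 2 v)]

open Matrix in
lemma gauss_parallelogram {n : ℕ} (A : Matrix (Fin n) (Fin n) ℝ) (x y z : Fin n → ℝ) :
    (x - y) ⬝ᵥ A *ᵥ (x - y) + (x - z) ⬝ᵥ A *ᵥ (x - z)
      = 2 * ((x - (1/2 : ℝ) • (y + z)) ⬝ᵥ A *ᵥ (x - (1/2 : ℝ) • (y + z)))
        + (1/2) * ((y - z) ⬝ᵥ A *ᵥ (y - z)) := by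
  simp only [mulVec_sub, mulVec_add, mulVec_smul, dotProduct_sub, sub_dotProduct, dotProduct_add,
    add_dotProduct, smul_dotProduct, dotProduct_smul, smul_eq_mul]
  ring

open Matrix in
/-- the translates of a centered Gaussian density with covariance Σ are
c-Lipschitz in L², with c = ‖Σ⁻¹‖₂^{1/2} / (√2 · π^{n/4} · det(Σ)^{1/4}). -/
theorem gaussian_translates_lipschitz_L2 {n : ℕ}
    (S : Matrix (Fin n) (Fin n) ℝ) (hS : S.PosDef)
    (K : (Fin n → ℝ) → ℝ)
    (hK : K = fun x => Real.exp (-(1/2) * (x ⬝ᵥ S⁻¹ *ᵥ x))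
        / Real.sqrt ((2 * Real.pi) ^ n * S.det))
    (y z : Fin n → ℝ) :
    eLpNorm (fun x => K (x - y) - K (x - z)) 2 (volume : Measure (Fin n → ℝ))
      ≤ ENNReal.ofReal
          ((Real.sqrt ‖Matrix.toEuclideanCLM (𝕜 := ℝ) S⁻¹‖
              / (Real.sqrt 2 * Real.pi ^ ((n : ℝ) / 4) * S.det ^ ((1 : ℝ) / 4)))
            * lpnorm 2 (y - z)) := by
  have hdet := hS.det_pos
  have hpi := Real.pi_pos
  set G : (Fin n → ℝ) → ℝ := fun x => Real.exp (-(x ⬝ᵥ S⁻¹ *ᵥ x)) with hG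
  set P : ℝ := Real.sqrt Real.pi ^ n with hP
  set R : ℝ := Real.sqrt S.det with hR
  have hPpos : 0 < P := by positivity
  have hRpos : 0 < R := by positivity
  have hI : ∫ x, G x = P * R := gauss_integral S hS
  have hGi : Integrable G := by
    by_contra hcon
    rw [integral_undef hcon] at hI
    have : 0 < P * R := by positivity
    linarith
  set q : ℝ := (y - z) ⬝ᵥ S⁻¹ *ᵥ (y - z) with hq
  set m : Fin n → ℝ := (1/2 : ℝ) • (y + z) with hm
  set C : ℝ := (2 * Real.pi) ^ n * S.det with hC
  have hCpos : 0 < C := by positivity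
  have hsq : ∀ x, (K (x - y) - K (x - z)) ^ 2
      = C⁻¹ * (G (x - y) + G (x - z) - 2 * Real.exp (-q / 4) * G (x - m)) := by
    intro x
    have hp := gauss_parallelogram S⁻¹ x y z
    rw [← hq, ← hm] at hp
    have e1 : ∀ t : ℝ, Real.exp (-(1/2) * t) ^ 2 = Real.exp (-t) := by
      intro t
      rw [← Real.exp_nat_mul]
      congr 1
      push_cast
      ring
    have e2 : Real.exp (-(1/2) * ((x - y) ⬝ᵥ S⁻¹ *ᵥ (x - y)))
        * Real.exp (-(1/2) * ((x - z) ⬝ᵥ S⁻¹ *ᵥ (x - z)))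
        = Real.exp (-q / 4) * G (x - m) := by
      rw [hG, ← Real.exp_add, ← Real.exp_add]
      congr 1
      linarith
    have e3 : Real.sqrt C ^ 2 = C := Real.sq_sqrt hCpos.le
    rw [hK]
    simp only
    rw [← sub_div, div_pow, e3, sub_sq, e1, e1, mul_assoc, e2]
    simp only [hG]
    rw [div_eq_inv_mul]
    ring
  have hi1 : Integrable (fun x => G (x - y)) := hGi.comp_sub_right y
  have hi2 : Integrable (fun x => G (x - z)) := hGi.comp_sub_right z
  have hi3 : Integrable (fun x => 2 * Real.exp (-q / 4) * G (x - m)) :=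
    (hGi.comp_sub_right m).const_mul _
  have hint : Integrable (fun x => (K (x - y) - K (x - z)) ^ 2) := by
    simp_rw [hsq]
    exact ((hi1.add hi2).sub hi3).const_mul _
  have hval : ∫ x, (K (x - y) - K (x - z)) ^ 2
      = C⁻¹ * (P * R * (2 - 2 * Real.exp (-q / 4))) := by
    simp_rw [hsq]
    have hi12 : Integrable (fun x => G (x - y) + G (x - z)) := hi1.add hi2
    rw [integral_const_mul, integral_sub hi12 hi3, integral_add hi1 hi2,
      integral_const_mul, integral_sub_right_eq_self G y, integral_sub_right_eq_self G z,
      integral_sub_right_eq_self G m, hI]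
    ring
  have hKc : Continuous K := by
    rw [hK]
    simp only [dotProduct, mulVec]
    fun_prop
  have hmeas : AEStronglyMeasurable (fun x => K (x - y) - K (x - z)) volume :=
    Continuous.aestronglyMeasurable (by fun_prop)
  have hmem := (memLp_two_iff_integrable_sq hmeas).mpr hint
  rw [hmem.eLpNorm_eq_integral_rpow_norm (by norm_num) (by norm_num)]
  apply ENNReal.ofReal_le_ofReal
  have hL : 0 ≤ lpnorm 2 (y - z) := norm_nonneg _
  simp only [ENNReal.toReal_ofNat, Real.rpow_ofNat, Real.norm_eq_abs, sq_abs]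
  rw [hval, ← one_div (2 : ℝ), ← Real.sqrt_eq_rpow]
  apply Real.sqrt_le_iff.mpr
  refine ⟨by positivity, ?_⟩
  have hp2 : (Real.pi ^ ((n : ℝ) / 4)) ^ 2 = P := by
    rw [hP, Real.sqrt_eq_rpow, ← Real.rpow_natCast, ← Real.rpow_natCast, ← Real.rpow_mul hpi.le,
      ← Real.rpow_mul hpi.le]
    congr 1
    push_cast
    ring
  have hd2 : (S.det ^ ((1 : ℝ) / 4)) ^ 2 = R := by
    rw [hR, Real.sqrt_eq_rpow, ← Real.rpow_natCast, ← Real.rpow_mul hdet.le]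
    norm_num
  have hqle := gauss_quad_le S⁻¹ (y - z)
  rw [← hq] at hqle
  rw [mul_pow, div_pow, mul_pow, mul_pow, hp2, hd2, Real.sq_sqrt (norm_nonneg _),
    Real.sq_sqrt (by norm_num : (0:ℝ) ≤ 2)]
  have hexp := Real.add_one_le_exp (-q / 4)
  have hq0 : 0 ≤ q := by
    have := hS.inv.posSemidef.dotProduct_mulVec_nonneg (y - z)
    rwa [star_trivial] at this
  have hPP : P ^ 2 = Real.pi ^ n := by
    rw [hP, ← pow_mul, mul_comm n 2, pow_mul, Real.sq_sqrt hpi.le]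
  have hRR : R ^ 2 = S.det := Real.sq_sqrt hdet.le
  have hCle : (P * R) ^ 2 ≤ C := by
    rw [mul_pow, hPP, hRR, hC, mul_pow]
    have h1 : (1:ℝ) ≤ 2 ^ n := one_le_pow₀ (by norm_num)
    have h2 : 0 < Real.pi ^ n := by positivity
    exact mul_le_mul_of_nonneg_right (le_mul_of_one_le_left h2.le h1) hdet.le
  have hPR : 0 < P * R := by positivity
  calc C⁻¹ * (P * R * (2 - 2 * Real.exp (-q / 4)))
      ≤ C⁻¹ * (P * R * (q / 2)) := by
        gcongr
        linarith
    _ ≤ ((P * R) ^ 2)⁻¹ * (P * R * (q / 2)) := by gcongr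
    _ = q / (2 * P * R) := by field_simp
    _ ≤ (‖Matrix.toEuclideanCLM (𝕜 := ℝ) S⁻¹‖ * lpnorm 2 (y - z) ^ 2) / (2 * P * R) := by gcongr
    _ = _ := by ring
end

section
/- Let K : ℝⁿ → ℝ be an a-Lipschitz function (with respect to the Euclidean norm) with compact support. Then for all y, z ∈ ℝⁿ, ‖K_y − K_z‖_{L²} ≤ c · ‖y − z‖_2 with c = a · (2 · |supp(K)|)^{1/2}, where K_y(x) = K(x − y) and |supp(K)| denotes the Lebesgue measure of the support of K. -/
open MeasureTheory

/-- the translates of an a-Lipschitz (w.r.t. the Euclidean norm) compactly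
supported kernel K are c-Lipschitz in L², with c = a·(2·|supp K|)^{1/2}. -/
theorem lipschitz_compact_support_translates_lipschitz_L2 {n : ℕ}
    (K : (Fin n → ℝ) → ℝ) (a : ℝ)
    (hlip : ∀ u v : Fin n → ℝ, |K u - K v| ≤ a * lpnorm 2 (u - v))
    (hsupp : HasCompactSupport K)
    (y z : Fin n → ℝ) :
    eLpNorm (fun x => K (x - y) - K (x - z)) 2 (volume : Measure (Fin n → ℝ))
      ≤ ENNReal.ofReal
          ((a * Real.sqrt (2 * ((volume : Measure (Fin n → ℝ)) (Function.support K)).toReal))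
            * lpnorm 2 (y - z)) := by
  have hC : 0 ≤ a * lpnorm 2 (y - z) := (abs_nonneg _).trans (hlip y z)
  set C := a * lpnorm 2 (y - z) with hCdef
  have hneg : lpnorm 2 (z - y) = lpnorm 2 (y - z) := by
    unfold lpnorm
    rw [← norm_neg]
    congr 1
    ext i
    simp
  have hbd : ∀ x, |K (x - y) - K (x - z)| ≤ C := by
    intro x
    have h := hlip (x - y) (x - z)
    have e : x - y - (x - z) = z - y := by abel
    rwa [e, hneg] at h
  set S : Set (Fin n → ℝ) := (fun x => x - y) ⁻¹' Function.support K ∪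
    (fun x => x - z) ⁻¹' Function.support K with hS
  have hfin : volume (Function.support K) ≠ ⊤ :=
    ((measure_mono (subset_tsupport K)).trans_lt hsupp.isCompact.measure_lt_top).ne
  have htr : ∀ w : Fin n → ℝ, volume ((fun x => x - w) ⁻¹' Function.support K)
      = volume (Function.support K) := by
    intro w
    simp only [sub_eq_add_neg]
    exact measure_preimage_add_right _ _ _
  have hvol : volume S ≤ 2 * volume (Function.support K) := by
    refine (measure_union_le _ _).trans ?_
    rw [htr, htr, two_mul]
  have h1 : eLpNorm (fun x => K (x - y) - K (x - z)) 2 (volume : Measure (Fin n → ℝ))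
      ≤ eLpNorm (S.indicator (fun _ => C)) 2 volume := by
    refine eLpNorm_mono (fun x => ?_)
    by_cases hx : x ∈ S
    · rw [Set.indicator_of_mem hx, Real.norm_eq_abs, Real.norm_eq_abs, abs_of_nonneg hC]
      exact hbd x
    · have hx' : K (x - y) = 0 ∧ K (x - z) = 0 := by
        simpa [hS, not_or] using hx
      simp [hx'.1, hx'.2]
  refine h1.trans ((eLpNorm_indicator_const_le C 2).trans ?_)
  have e : a * Real.sqrt (2 * (volume (Function.support K)).toReal) * lpnorm 2 (y - z)
      = C * Real.sqrt (2 * (volume (Function.support K)).toReal) := by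
    rw [hCdef]; ring
  rw [e, ENNReal.ofReal_mul hC, Real.enorm_eq_ofReal hC]
  gcongr
  rw [Real.sqrt_eq_rpow, ← ENNReal.ofReal_rpow_of_nonneg (by positivity) (by norm_num),
    ENNReal.ofReal_mul (by norm_num), ENNReal.ofReal_toReal hfin]
  simp only [ENNReal.toReal_ofNat, ENNReal.ofReal_ofNat]
  gcongr
end
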